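/- arXiv:2602.04558 — 2 statements merged into one kernel-verified Lean document; each statement's English description precedes it below -/
import Mathlib

section
/- Let q be a prime power and let m, n be positive integers, and let τ denote the cyclic shift operator on 𝔽_q^{mn}. If h_q(mn) = 0, then h_{τ^m}(𝔽_q^{mn}) = 0, and hence h_{q^m}(n) = 0. More generally, if h_q(mn) ≤ m − 1, then h_{q^m}(n) = 0. -/
noncomputable section

/-- The cyclic shift operator on `Fin n → F`, sending `(a_0, …, a_{n-1})`
to `(a_{n-1}, a_0, …, a_{n-2})`. -/
def cshift (F : Type*) [Field F] (n : ℕ) : (Fin n → F) →ₗ[F] (Fin n → F) where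
  toFun a := a ∘ (finRotate n).symm
  map_add' _ _ := rfl
  map_smul' _ _ := rfl

/-- A subspace `U ⊆ F^n` is cyclically covering if the union of its cyclic shifts is `F^n`. -/
def IsCyclicallyCovering {F : Type*} [Field F] {n : ℕ} (U : Submodule F (Fin n → F)) : Prop :=
  ⋃ i ∈ Finset.range n, ⇑(cshift F n ^ i) '' (U : Set (Fin n → F)) = Set.univ

/-- `hcc F n` is the largest possible codimension of a cyclically covering subspace of `F^n`. -/
def hcc (F : Type*) [Field F] (n : ℕ) : ℕ :=
  sSup {k : ℕ | ∃ U : Submodule F (Fin n → F),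
    IsCyclicallyCovering U ∧ n - Module.finrank F U = k}

/-- `hTauM F m n` is the largest possible codimension of a subspace `U ⊆ F^{mn}` with
`⋃_{k=0}^{n-1} (τ^m)^k(U) = F^{mn}`, where `τ` is the cyclic shift on `F^{mn}`. -/
def hTauM (F : Type*) [Field F] (m n : ℕ) : ℕ :=
  sSup {k : ℕ | ∃ U : Submodule F (Fin (m * n) → F),
    (⋃ j ∈ Finset.range n,
      ⇑(cshift F (m * n) ^ (m * j)) '' (U : Set (Fin (m * n) → F))) = Set.univ ∧
    m * n - Module.finrank F U = k}


lemma exists_algebra_aux (F K : Type*) [Field F] [Fintype F] [Field K] [Fintype K]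
    (m : ℕ) (hm : 0 < m) (hcardK : Fintype.card K = Fintype.card F ^ m) :
    ∃ _ : Algebra F K, Module.finrank F K = m := by
  classical
  obtain ⟨p, hp⟩ := CharP.exists F
  haveI := hp
  haveI : Fact p.Prime := ⟨CharP.char_is_prime F p⟩
  haveI : NeZero m := ⟨hm.ne'⟩
  haveI : Finite (FiniteField.Extension F p m) := Module.finite_of_finite F
  letI : Fintype (FiniteField.Extension F p m) := Fintype.ofFinite _
  have hc : Fintype.card (FiniteField.Extension F p m) = Fintype.card K := by
    rw [hcardK, Fintype.card_eq_nat_card, FiniteField.natCard_extension,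
      Fintype.card_eq_nat_card]
  let e := FiniteField.ringEquivOfCardEq hc
  letI A : Algebra F K :=
    (e.toRingHom.comp (algebraMap F (FiniteField.Extension F p m))).toAlgebra
  refine ⟨A, ?_⟩
  have h := Module.card_eq_pow_finrank (K := F) (V := K)
  rw [hcardK] at h
  exact (Nat.pow_right_injective (Fintype.one_lt_card (α := F)) h).symm

lemma cshift_pow_apply (F : Type*) [Field F] (n k : ℕ) (a : Fin n → F) (v : Fin n) :
    (cshift F n ^ k) a ((finRotate n ^ k) v) = a v := by
  induction k generalizing v with
  | zero => simp
  | succ k ih =>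
    rw [pow_succ', pow_succ', Module.End.mul_apply, Equiv.Perm.mul_apply]
    change (cshift F n ^ k) a ((finRotate n).symm (finRotate n _)) = _
    rw [Equiv.symm_apply_apply, ih]

lemma finRotate_val (n : ℕ) (v : Fin n) : (finRotate n v).val = (v.val + 1) % n := by
  cases n with
  | zero => exact v.elim0
  | succ n =>
    rw [coe_finRotate]
    have := v.isLt
    split_ifs with h
    · subst h; simp
    · have : v.val ≠ n := fun h' => h (Fin.ext h')
      rw [Nat.mod_eq_of_lt (by omega)]

lemma finRotate_pow_val (n k : ℕ) (v : Fin n) :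
    ((finRotate n ^ k) v).val = (v.val + k) % n := by
  induction k with
  | zero => simp [Nat.mod_eq_of_lt v.isLt]
  | succ k ih =>
    rw [pow_succ', Equiv.Perm.mul_apply, finRotate_val, ih, Nat.mod_add_mod, add_assoc]

/-- The block index equivalence `(i, j) ↦ j + m * i`. -/
def blockEquiv (m n : ℕ) : Fin n × Fin m ≃ Fin (m * n) :=
  finProdFinEquiv.trans (finCongr (mul_comm n m))

lemma blockEquiv_val (m n : ℕ) (i : Fin n) (j : Fin m) :
    (blockEquiv m n (i, j)).val = j.val + m * i.val := rfl

lemma finRotate_blockEquiv (m n : ℕ) (i : Fin n) (j : Fin m) :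
    (finRotate (m * n) ^ m) (blockEquiv m n (i, j)) = blockEquiv m n (finRotate n i, j) := by
  apply Fin.ext
  rw [finRotate_pow_val, blockEquiv_val, blockEquiv_val, finRotate_val]
  have hi := i.isLt
  have hj := j.isLt
  have e : j.val + m * i.val + m = j.val + m * (i.val + 1) := by ring
  rw [e]
  rcases Nat.lt_or_ge (i.val + 1) n with h | h
  · rw [Nat.mod_eq_of_lt h, Nat.mod_eq_of_lt]
    calc j.val + m * (i.val + 1) < m + m * (i.val + 1) := by omega
      _ = m * (i.val + 2) := by ring
      _ ≤ m * n := Nat.mul_le_mul_left _ h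
  · have h' : i.val + 1 = n := by omega
    rw [h', Nat.add_mod_right, Nat.mod_self, Nat.mod_eq_of_lt]
    · simp
    · exact lt_of_lt_of_le hj (Nat.le_mul_of_pos_right m (by omega))

/-- Expanding each coordinate in a basis. -/
def blockLin {F K : Type*} [Field F] [Field K] [Algebra F K] (m n : ℕ)
    (b : Module.Basis (Fin m) F K) : (Fin n → K) ≃ₗ[F] (Fin (m * n) → F) where
  toFun x t := b.equivFun (x ((blockEquiv m n).symm t).1) ((blockEquiv m n).symm t).2
  map_add' x y := by ext t; simp
  map_smul' c x := by ext t; simp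
  invFun y i := b.equivFun.symm fun j => y (blockEquiv m n (i, j))
  left_inv x := by
    ext i
    simp only [Equiv.symm_apply_apply]
    exact b.equivFun.symm_apply_apply _
  right_inv y := by
    ext t
    simp only [LinearEquiv.apply_symm_apply, Prod.mk.eta, Equiv.apply_symm_apply]

lemma blockLin_cshift {F K : Type*} [Field F] [Field K] [Algebra F K] (m n : ℕ)
    (b : Module.Basis (Fin m) F K) (x : Fin n → K) :
    blockLin m n b (cshift K n x) = (cshift F (m * n) ^ m) (blockLin m n b x) := by
  ext t
  obtain ⟨⟨i, j⟩, rfl⟩ := (blockEquiv m n).surjective t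
  obtain ⟨i, rfl⟩ := (finRotate n).surjective i
  rw [← finRotate_blockEquiv, cshift_pow_apply, finRotate_blockEquiv]
  simp [blockLin, cshift, -finRotate_apply, -finRotate_symm_apply]

lemma blockLin_cshift_pow {F K : Type*} [Field F] [Field K] [Algebra F K] (m n : ℕ)
    (b : Module.Basis (Fin m) F K) (k : ℕ) (x : Fin n → K) :
    blockLin m n b ((cshift K n ^ k) x) = (cshift F (m * n) ^ (m * k)) (blockLin m n b x) := by
  induction k with
  | zero => simp
  | succ k ih =>
    rw [pow_succ', Module.End.mul_apply, blockLin_cshift, ih, ← Module.End.mul_apply, ← pow_add,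
      mul_add, mul_one, add_comm]

lemma covering_of_tau {F : Type*} [Field F] {m n : ℕ} (hm : 0 < m)
    {U : Submodule F (Fin (m * n) → F)}
    (h : (⋃ j ∈ Finset.range n,
      ⇑(cshift F (m * n) ^ (m * j)) '' (U : Set (Fin (m * n) → F))) = Set.univ) :
    IsCyclicallyCovering U := by
  refine Set.eq_univ_of_forall fun y => ?_
  have hy : y ∈ _ := h.symm ▸ Set.mem_univ y
  simp only [Set.mem_iUnion, Finset.mem_range, exists_prop] at hy ⊢
  obtain ⟨j, hj, hy⟩ := hy
  exact ⟨m * j, Nat.mul_lt_mul_of_pos_left hj hm, hy⟩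

lemma codim_le_hcc {F : Type*} [Field F] {n : ℕ} {U : Submodule F (Fin n → F)}
    (h : IsCyclicallyCovering U) : n - Module.finrank F U ≤ hcc F n := by
  apply le_csSup
  · refine ⟨n, ?_⟩
    rintro k ⟨U, -, rfl⟩
    exact Nat.sub_le _ _
  · exact ⟨U, h, rfl⟩

lemma hcc_ext_eq_zero (F K : Type*) [Field F] [Fintype F] [Field K] [Fintype K]
    (m n : ℕ) (hm : 0 < m)
    (hcardK : Fintype.card K = Fintype.card F ^ m) (h : hcc F (m * n) ≤ m - 1) :
    hcc K n = 0 := by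
  obtain ⟨A, hA⟩ := exists_algebra_aux F K m hm hcardK
  haveI : FiniteDimensional F K := Module.Finite.of_finite
  let b : Module.Basis (Fin m) F K := Module.finBasisOfFinrankEq F K hA
  rw [← Nat.le_zero]
  refine csSup_le' ?_
  rintro k ⟨U, hU, rfl⟩
  by_contra hk
  let W : Submodule F (Fin (m * n) → F) :=
    (U.restrictScalars F).map (blockLin m n b).toLinearMap
  have hW : IsCyclicallyCovering W := by
    apply covering_of_tau hm
    refine Set.eq_univ_of_forall fun y => ?_
    have hy : (blockLin m n b).symm y ∈ _ := hU.symm ▸ Set.mem_univ _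
    simp only [Set.mem_iUnion, Finset.mem_range, exists_prop] at hy ⊢
    obtain ⟨j, hj, u, hu, huy⟩ := hy
    refine ⟨j, hj, blockLin m n b u, ⟨u, hu, rfl⟩, ?_⟩
    rw [← blockLin_cshift_pow, huy, LinearEquiv.apply_symm_apply]
  have hd : Module.finrank F W = m * Module.finrank K U := by
    have h1 : Module.finrank F W = Module.finrank F (U.restrictScalars F) :=
      LinearEquiv.finrank_map_eq (blockLin m n b) (U.restrictScalars F)
    rw [h1, ← hA]
    exact (Module.finrank_mul_finrank F K U).symm
  have h2 := codim_le_hcc hW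
  rw [hd, ← Nat.mul_sub] at h2
  have h3 : m * 1 ≤ m * (n - Module.finrank K U) := Nat.mul_le_mul_left _ (by omega)
  omega

/-- Let `q` be a prime power and `m, n` positive integers, and let `K` be the field with
`q^m` elements.  If `h_q(mn) = 0`, then `h_{τ^m}(𝔽_q^{mn}) = 0` and hence
`h_{q^m}(n) = 0`.  More generally, if `h_q(mn) ≤ m - 1`, then `h_{q^m}(n) = 0`. -/
theorem stmt17 (F K : Type*) [Field F] [Fintype F] [Field K] [Fintype K]
    (m n : ℕ) (hm : 0 < m) (hn : 0 < n)
    (hcardK : Fintype.card K = Fintype.card F ^ m) :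
    (hcc F (m * n) = 0 → hTauM F m n = 0 ∧ hcc K n = 0) ∧
    (hcc F (m * n) ≤ m - 1 → hcc K n = 0) := by
  refine ⟨fun h => ⟨?_, hcc_ext_eq_zero F K m n hm hcardK (by omega)⟩,
    hcc_ext_eq_zero F K m n hm hcardK⟩
  rw [← Nat.le_zero]
  refine csSup_le' ?_
  rintro k ⟨U, hU, rfl⟩
  exact h ▸ codim_le_hcc (covering_of_tau hm hU)
end
end

section
/- Let d be a nonnegative integer. If n = 3 or n = 2^d, then h_4(n) = 0; that is, the only cyclically covering subspace of 𝔽_4^n is the whole space. -/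
noncomputable section

open Fin.CommRing in
theorem cshift_pow_self (F : Type*) [Field F] (n : ℕ) : cshift F n ^ n = 1 := by
  rcases n with _ | m
  · rfl
  have key : ∀ (k : ℕ) (a : Fin (m + 1) → F) (i : Fin (m + 1)),
      (cshift F (m + 1) ^ k) a i = a (i - (k : Fin (m + 1))) := by
    intro k
    induction k with
    | zero => intro a i; simp
    | succ k ih =>
      intro a i
      rw [pow_succ, Module.End.mul_apply, ih]
      change a ((finRotate (m + 1)).symm _) = _
      congr 1
      rw [Equiv.symm_apply_eq, finRotate_apply]
      push_cast
      ring
  ext1 a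
  ext i
  simp [key]

theorem exists_step {F V : Type*} [Field F] [AddCommGroup V] [Module F V]
    (T : Module.End F V) (K : Submodule F V) (l : List F) :
    ∀ v : V, v ∉ K → (l.map (fun a => T - algebraMap F (Module.End F V) a)).prod v ∈ K →
      ∃ a ∈ l, ∃ u : V, u ∉ K ∧ T u - a • u ∈ K := by
  induction l with
  | nil => intro v hv h; simp at h; exact absurd h hv
  | cons a l ih =>
    intro v hv h
    rw [List.map_cons, List.prod_cons, Module.End.mul_apply] at h
    by_cases h2 : (l.map (fun a => T - algebraMap F (Module.End F V) a)).prod v ∈ K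
    · obtain ⟨b, hb, u, hu⟩ := ih v hv h2
      exact ⟨b, List.mem_cons_of_mem _ hb, u, hu⟩
    · refine ⟨a, by simp, _, h2, ?_⟩
      simpa [Module.algebraMap_end_apply] using h

theorem eq_top_of_list {F : Type*} [Field F] {n : ℕ} (l : List F) (h0 : ∀ a ∈ l, a ≠ 0)
    (hl : (l.map (fun a => cshift F n - algebraMap F (Module.End F (Fin n → F)) a)).prod = 0)
    (U : Submodule F (Fin n → F)) (hU : IsCyclicallyCovering U) : U = ⊤ := by
  by_contra hne
  obtain ⟨f, hf, hUf⟩ := Submodule.exists_le_ker_of_lt_top U (lt_top_iff_ne_top.2 hne)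
  obtain ⟨v, hv⟩ : ∃ v, f v ≠ 0 := by
    by_contra! h
    exact hf (LinearMap.ext h)
  let K : Submodule F (Fin n → F) := ⨅ i : ℕ, LinearMap.ker (f ∘ₗ (cshift F n ^ i))
  have memK : ∀ x, x ∈ K ↔ ∀ i : ℕ, f ((cshift F n ^ i) x) = 0 := by
    intro x; simp [K, Submodule.mem_iInf]
  obtain ⟨a, ha, u, hu, hT⟩ := exists_step (cshift F n) K l v
    (fun h => hv (by simpa using (memK v).1 h 0)) (by rw [hl]; simp)
  have hstep : ∀ i : ℕ, f ((cshift F n ^ i) u) = a ^ i * f u := by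
    intro i
    induction i with
    | zero => simp
    | succ i ih =>
      have h := (memK _).1 hT i
      rw [map_sub, map_sub, map_smul, map_smul, sub_eq_zero, ← Module.End.mul_apply,
        ← pow_succ, ih] at h
      rw [h, smul_eq_mul]
      ring
  have hfu : f u ≠ 0 := by
    intro h
    exact hu ((memK u).2 fun i => by rw [hstep, h, mul_zero])
  have hmem : u ∈ ⋃ i ∈ Finset.range n, ⇑(cshift F n ^ i) '' (U : Set (Fin n → F)) := by
    rw [show _ = _ from hU]; trivial
  simp only [Set.mem_iUnion, Finset.mem_range] at hmem
  obtain ⟨i, hi, y, hy, rfl⟩ := hmem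
  have h := hstep (n - i)
  rw [← Module.End.mul_apply, ← pow_add, Nat.sub_add_cancel hi.le, cshift_pow_self,
    Module.End.one_apply, show f y = 0 from hUf hy] at h
  exact mul_ne_zero (pow_ne_zero _ (h0 a ha)) hfu h.symm

theorem exists_list (F : Type*) [Field F] [Fintype F] (hcard : Fintype.card F = 4)
    (d n : ℕ) (hn : n = 3 ∨ n = 2 ^ d) :
    ∃ l : List F, (∀ a ∈ l, a ≠ 0) ∧
    (l.map (fun a => cshift F n - algebraMap F (Module.End F (Fin n → F)) a)).prod = 0 := by
  have h4 : (4 : F) = 0 := by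
    have := FiniteField.cast_card_eq_zero F
    rw [hcard] at this
    exact_mod_cast this
  have h2 : (2 : F) = 0 := by
    have : (2 : F) * 2 = 0 := by rw [← h4]; norm_num
    simpa using this
  have hT := cshift_pow_self F n
  rcases hn with rfl | rfl
  · classical
    obtain ⟨w, hw⟩ : ∃ w : F, w ∉ ({0, 1} : Finset F) := by
      by_contra! h
      have h1 := Finset.card_le_card (fun x _ => h x : (Finset.univ : Finset F) ⊆ {0, 1})
      rw [Finset.card_univ, hcard] at h1
      have := Finset.card_le_two (a := (0 : F)) (b := 1)
      omega
    simp only [Finset.mem_insert, Finset.mem_singleton, not_or] at hw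
    obtain ⟨w0, w1⟩ := hw
    have hw4 : w ^ 4 = w := by rw [← hcard]; exact FiniteField.pow_card w
    have hq : 1 + w + w ^ 2 = 0 := by
      have : w * (w - 1) * (1 + w + w ^ 2) = 0 := by linear_combination hw4
      exact (mul_eq_zero.1 this).resolve_left (mul_ne_zero w0 (sub_ne_zero.2 w1))
    refine ⟨[1, w, w ^ 2], by simp [w0], ?_⟩
    have hp : (Polynomial.X - Polynomial.C 1) * ((Polynomial.X - Polynomial.C w) *
        (Polynomial.X - Polynomial.C (w ^ 2))) = (Polynomial.X ^ 3 - 1 : Polynomial F) := by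
      have hq' := congrArg (Polynomial.C : F → Polynomial F) hq
      simp only [map_add, map_one, map_pow, map_zero] at hq' ⊢
      linear_combination (Polynomial.X * Polynomial.C w - Polynomial.X ^ 2
        - (Polynomial.C w - 1) ) * hq'
    have := congrArg (Polynomial.aeval (cshift F 3)) hp
    simp only [map_mul, map_sub, map_pow, Polynomial.aeval_X, Polynomial.aeval_C, map_one,
      hT, sub_self] at this
    simpa using this
  · refine ⟨List.replicate (2 ^ d) 1, ?_, ?_⟩
    · intro a ha
      rw [List.eq_of_mem_replicate ha]
      exact one_ne_zero
    · rw [List.map_replicate, List.prod_replicate]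
      have : CharP F 2 := CharTwo.of_one_ne_zero_of_two_eq_zero one_ne_zero h2
      have hp : (Polynomial.X - 1 : Polynomial F) ^ 2 ^ d = Polynomial.X ^ 2 ^ d - 1 := by
        rw [sub_pow_char_pow, one_pow]
      have := congrArg (Polynomial.aeval (cshift F (2 ^ d))) hp
      simpa [hT] using this

/-- Let `d` be a nonnegative integer.  If `n = 3` or `n = 2^d`, then `h_4(n) = 0`;
that is, the only cyclically covering subspace of `𝔽_4^n` is the whole space. -/
theorem stmt18 (F : Type*) [Field F] [Fintype F] (hcard : Fintype.card F = 4)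
    (d n : ℕ) (hn : n = 3 ∨ n = 2 ^ d) :
    hcc F n = 0 ∧ ∀ U : Submodule F (Fin n → F), IsCyclicallyCovering U → U = ⊤ := by
  have main : ∀ U : Submodule F (Fin n → F), IsCyclicallyCovering U → U = ⊤ := by
    obtain ⟨l, h0, hl⟩ := exists_list F hcard d n hn
    exact fun U hU => eq_top_of_list l h0 hl U hU
  refine ⟨?_, main⟩
  unfold hcc
  apply Nat.le_zero.1
  apply csSup_le'
  rintro k ⟨U, hU, rfl⟩
  rw [main U hU, finrank_top, Module.finrank_fin_fun, Nat.sub_self]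
end
end
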